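/- arXiv:2604.10952 — 11 statements merged into one kernel-verified Lean document; each statement's English description precedes it below -/
import Mathlib

section
/- The set function h is monotone: for all subsets P₁ ⊆ P₂ of {1,…,m}, h(P₁) ≤ h(P₂). -/
open Finset

noncomputable section

/-- Frobenius inner product `⟨S, γ⟩ = Σ_{i,j} S_{ij} γ_{ij}`. -/
def dotS {m n : ℕ} (S γ : Fin m → Fin n → ℝ) : ℝ := ∑ i, ∑ j, S i j * γ i j

/-- Transport polytope with equality marginals. -/
def Gamma {m n : ℕ} (μ : Fin m → ℝ) (ν : Fin n → ℝ) : Set (Fin m → Fin n → ℝ) :=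
  {γ | (∀ i j, 0 ≤ γ i j) ∧ (∀ i, ∑ j, γ i j = μ i) ∧ (∀ j, ∑ i, γ i j = ν j)}

/-- Semi-relaxed transport polytope: target marginal constraint is `≤`. -/
def GammaLe {m n : ℕ} (μ : Fin m → ℝ) (ν : Fin n → ℝ) : Set (Fin m → Fin n → ℝ) :=
  {γ | (∀ i j, 0 ≤ γ i j) ∧ (∀ i, ∑ j, γ i j = μ i) ∧ (∀ j, ∑ i, γ i j ≤ ν j)}

/-- Indicator vector of a subset `P ⊆ {1,…,m}`. -/
def indVec {m : ℕ} (P : Finset (Fin m)) : Fin m → ℝ := fun i => if i ∈ P then 1 else 0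

/-- `h(P) = max_{γ ∈ Γ(1_P, (|P|/n)𝟙)} ⟨S, γ⟩`. -/
def hval {m n : ℕ} (S : Fin m → Fin n → ℝ) (P : Finset (Fin m)) : ℝ :=
  sSup (dotS S '' Gamma (indVec P) (fun _ => (P.card : ℝ) / (n : ℝ)))

/-- `f(P) = max_{γ ∈ Γ_≤(1_P, (k/n)𝟙)} ⟨S, γ⟩`. -/
def fval {m n : ℕ} (k : ℕ) (S : Fin m → Fin n → ℝ) (P : Finset (Fin m)) : ℝ :=
  sSup (dotS S '' GammaLe (indVec P) (fun _ => (k : ℝ) / (n : ℝ)))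

/-- `h` is monotone. -/
theorem stmt_1 (m n : ℕ) (hm : 0 < m) (hn : 0 < n)
    (S : Fin m → Fin n → ℝ) (hS : ∀ i j, 0 ≤ S i j)
    (P₁ P₂ : Finset (Fin m)) (hsub : P₁ ⊆ P₂) :
    hval S P₁ ≤ hval S P₂ := by
  have hn' : (n : ℝ) ≠ 0 := by positivity
  have hsum : ∀ P : Finset (Fin m), ∑ i, indVec P i = (P.card : ℝ) := by
    intro P
    simp [indVec]
  have hind0 : ∀ (P : Finset (Fin m)) i, 0 ≤ indVec P i := by
    intro P i
    unfold indVec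
    split_ifs <;> norm_num
  have hind1 : ∀ (P : Finset (Fin m)) i, indVec P i ≤ 1 := by
    intro P i
    unfold indVec
    split_ifs <;> norm_num
  have hmono : ∀ i, indVec P₁ i ≤ indVec P₂ i := by
    intro i
    by_cases h : i ∈ P₁
    · simp [indVec, h, hsub h]
    · have : indVec P₁ i = 0 := by simp [indVec, h]
      rw [this]
      exact hind0 P₂ i
  have hbdd : BddAbove (dotS S '' Gamma (indVec P₂) (fun _ => (P₂.card : ℝ) / (n : ℝ))) := by
    refine ⟨∑ i, ∑ j, S i j, ?_⟩
    rintro _ ⟨γ, ⟨h0, h1, _⟩, rfl⟩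
    refine Finset.sum_le_sum fun i _ => Finset.sum_le_sum fun j _ => ?_
    have hle : γ i j ≤ 1 := by
      calc γ i j ≤ ∑ j, γ i j :=
            Finset.single_le_sum (fun j _ => h0 i j) (Finset.mem_univ j)
        _ = indVec P₂ i := h1 i
        _ ≤ 1 := hind1 P₂ i
    exact mul_le_of_le_one_right (hS i j) hle
  unfold hval
  apply csSup_le
  · refine ⟨_, ⟨fun i _ => indVec P₁ i / n, ⟨?_, ?_, ?_⟩, rfl⟩⟩
    · intro i j
      exact div_nonneg (hind0 P₁ i) (Nat.cast_nonneg n)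
    · intro i
      simp only [Finset.sum_const, Finset.card_univ, Fintype.card_fin, nsmul_eq_mul]
      field_simp
    · intro j
      rw [← Finset.sum_div, hsum]
  · rintro _ ⟨γ, ⟨h0, h1, h2⟩, rfl⟩
    have hd : ∀ i, 0 ≤ (indVec P₂ i - indVec P₁ i) / (n : ℝ) := fun i =>
      div_nonneg (sub_nonneg.2 (hmono i)) (Nat.cast_nonneg n)
    have hle : dotS S γ ≤ dotS S (fun i j => γ i j + (indVec P₂ i - indVec P₁ i) / n) := by
      refine Finset.sum_le_sum fun i _ => Finset.sum_le_sum fun j _ => ?_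
      exact mul_le_mul_of_nonneg_left (le_add_of_nonneg_right (hd i)) (hS i j)
    refine hle.trans (le_csSup hbdd ⟨_, ⟨?_, ?_, ?_⟩, rfl⟩)
    · intro i j
      exact add_nonneg (h0 i j) (hd i)
    · intro i
      rw [Finset.sum_add_distrib, h1]
      simp only [Finset.sum_const, Finset.card_univ, Fintype.card_fin, nsmul_eq_mul]
      field_simp
      ring
    · intro j
      rw [Finset.sum_add_distrib, h2, ← Finset.sum_div, Finset.sum_sub_distrib, hsum, hsum]
      ring
end
end

section
/- For every subset P of {1,…,m} and every index i ∈ {1,…,m} with i ∉ P, h(P ∪ {i}) ≥ h(P) + (1/n)·Σ_{j=1}^{n} S_{ij}. -/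
open Finset

noncomputable section

/-- `h(P ∪ {i}) ≥ h(P) + (1/n)·Σ_j S_{ij}` for `i ∉ P`. -/
theorem stmt_2 (m n : ℕ) (hm : 0 < m) (hn : 0 < n)
    (S : Fin m → Fin n → ℝ) (hS : ∀ i j, 0 ≤ S i j)
    (P : Finset (Fin m)) (i : Fin m) (hi : i ∉ P) :
    hval S P + (1 / (n : ℝ)) * ∑ j, S i j ≤ hval S (insert i P) := by 
  have hn' : (n : ℝ) ≠ 0 := by positivity
  have key : hval S P ≤ hval S (insert i P) - (1 / (n : ℝ)) * ∑ j, S i j := by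
    apply csSup_le
    · refine Set.Nonempty.image _ ⟨fun a _ => indVec P a / n, ?_, ?_, ?_⟩
      · intro a j
        dsimp only [indVec]
        split_ifs <;> positivity
      · intro a
        simp only [Finset.sum_const, Finset.card_univ, Fintype.card_fin, nsmul_eq_mul]
        field_simp
      · intro j
        rw [← Finset.sum_div]
        simp [indVec]
    · rintro _ ⟨γ, ⟨h0, h1, h2⟩, rfl⟩
      rw [le_sub_iff_add_le]
      apply le_csSup
      · refine ⟨∑ a, ∑ j, S a j, ?_⟩
        rintro _ ⟨δ, ⟨d0, d1, d2⟩, rfl⟩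
        refine Finset.sum_le_sum fun a _ => Finset.sum_le_sum fun j _ => ?_
        have e1 : δ a j ≤ ∑ j, δ a j :=
          Finset.single_le_sum (fun k _ => d0 a k) (Finset.mem_univ j)
        have e2 : indVec (insert i P) a ≤ 1 := by
          unfold indVec
          split_ifs <;> norm_num
        rw [d1 a] at e1
        exact mul_le_of_le_one_right (hS a j) (e1.trans e2)
      · refine ⟨fun a j => γ a j + if a = i then 1 / (n : ℝ) else 0, ⟨?_, ?_, ?_⟩, ?_⟩
        · intro a j
          have := h0 a j
          dsimp only
          split_ifs <;> positivity
        · intro a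
          rw [Finset.sum_add_distrib, h1 a]
          by_cases ha : a = i
          · subst ha
            simp [indVec, hi, hn']
          · simp [indVec, ha]
        · intro j
          rw [Finset.sum_add_distrib, h2 j, Finset.card_insert_of_notMem hi]
          simp [add_div]
        · simp only [dotS, mul_add, Finset.sum_add_distrib]
          congr 1
          rw [Finset.sum_eq_single i]
          · simp [Finset.sum_mul, mul_comm _ (∑ j, S i j)]
          · intro b _ hb
            simp [hb]
          · simp
  linarith
end
end

section
/- The set function h is super-additive over disjoint sets: for all subsets P₁, P₂ of {1,…,m} with P₁ ∩ P₂ = ∅, h(P₁ ∪ P₂) ≥ h(P₁) + h(P₂). -/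
open Finset

noncomputable section

theorem dotS_bdd {m n : ℕ} (S : Fin m → Fin n → ℝ) (hS : ∀ i j, 0 ≤ S i j) (P : Finset (Fin m)) :
    BddAbove (dotS S '' Gamma (indVec P) (fun _ => (P.card : ℝ) / (n : ℝ))) := by
  refine ⟨∑ i, ∑ j, S i j, ?_⟩
  rintro _ ⟨γ, ⟨h0, h1, _⟩, rfl⟩
  unfold dotS
  refine Finset.sum_le_sum fun i _ => Finset.sum_le_sum fun j _ => ?_
  have hle : γ i j ≤ 1 := by
    have h2 : γ i j ≤ ∑ j, γ i j :=
      Finset.single_le_sum (fun j _ => h0 i j) (Finset.mem_univ j)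
    have h3 : indVec P i ≤ 1 := by unfold indVec; split_ifs <;> norm_num
    linarith [h1 i]
  nlinarith [hS i j]

theorem Gamma_nonempty {m n : ℕ} (hn : 0 < n) (P : Finset (Fin m)) :
    (Gamma (indVec P) (fun _ : Fin n => (P.card : ℝ) / (n : ℝ))).Nonempty := by
  have hn' : (n : ℝ) ≠ 0 := by positivity
  refine ⟨fun i _ => indVec P i / n, ?_, ?_, ?_⟩
  · intro i j
    unfold indVec
    beta_reduce
    split_ifs <;> positivity
  · intro i
    simp
    field_simp
  · intro j
    rw [← Finset.sum_div]
    simp [indVec]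

/-- `h` is super-additive over disjoint sets. -/
theorem stmt_3 (m n : ℕ) (hm : 0 < m) (hn : 0 < n)
    (S : Fin m → Fin n → ℝ) (hS : ∀ i j, 0 ≤ S i j)
    (P₁ P₂ : Finset (Fin m)) (hdisj : Disjoint P₁ P₂) :
    hval S P₁ + hval S P₂ ≤ hval S (P₁ ∪ P₂) := by
  have hne₁ := (Gamma_nonempty hn P₁).image (dotS S)
  have hne₂ := (Gamma_nonempty hn P₂).image (dotS S)
  have key : ∀ x ∈ dotS S '' Gamma (indVec P₁) (fun _ => (P₁.card : ℝ) / (n : ℝ)),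
      ∀ y ∈ dotS S '' Gamma (indVec P₂) (fun _ => (P₂.card : ℝ) / (n : ℝ)),
      x + y ≤ hval S (P₁ ∪ P₂) := by
    rintro _ ⟨a, ⟨a0, a1, a2⟩, rfl⟩ _ ⟨b, ⟨b0, b1, b2⟩, rfl⟩
    refine le_csSup (dotS_bdd S hS _) ⟨fun i j => a i j + b i j, ⟨?_, ?_, ?_⟩, ?_⟩
    · intro i j
      exact add_nonneg (a0 i j) (b0 i j)
    · intro i
      rw [Finset.sum_add_distrib, a1, b1]
      have hd : i ∈ P₁ → i ∉ P₂ := fun h => Finset.disjoint_left.mp hdisj h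
      unfold indVec
      by_cases h1 : i ∈ P₁ <;> by_cases h2 : i ∈ P₂ <;> simp_all
    · intro j
      rw [Finset.sum_add_distrib, a2, b2, Finset.card_union_of_disjoint hdisj]
      push_cast
      ring
    · simp only [dotS, mul_add, Finset.sum_add_distrib]
  have h1 : hval S P₁ ≤ hval S (P₁ ∪ P₂) - hval S P₂ := by
    refine csSup_le hne₁ fun x hx => ?_
    have h2 : hval S P₂ ≤ hval S (P₁ ∪ P₂) - x :=
      csSup_le hne₂ fun y hy => by linarith [key x hx y hy]
    linarith
  linarith
end
end

section
/- For every positive integer l with l ≥ m, the set function ψ defined on subsets P of {1,…,m} by ψ(P) = max_{γ ∈ Γ_≤((1/l)·1_P, (1/n)𝟙)} ⟨S,γ⟩ is submodular: for all subsets A, B of {1,…,m}, ψ(A ∪ B) + ψ(A ∩ B) ≤ ψ(A) + ψ(B). -/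
open Finset

noncomputable section

/-- Row potential `max_j (S_ij - v_j)`. -/
def rowMax {m n : ℕ} (S : Fin m → Fin n → ℝ) (v : Fin n → ℝ) (i : Fin m) : ℝ :=
  ⨆ j, (S i j - v j)

lemma le_rowMax {m n : ℕ} (S : Fin m → Fin n → ℝ) (v : Fin n → ℝ) (i : Fin m) (j : Fin n) :
    S i j - v j ≤ rowMax S v i :=
  le_ciSup (f := fun j => S i j - v j) (Set.finite_range _).bddAbove j

/-- Dual objective. -/
def dualObj {m n : ℕ} (S : Fin m → Fin n → ℝ) (μ : Fin m → ℝ) (ν v : Fin n → ℝ) : ℝ :=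
  ∑ j, v j * ν j + ∑ i, μ i * rowMax S v i

lemma weak_dual {m n : ℕ} (S : Fin m → Fin n → ℝ) (μ : Fin m → ℝ) (ν v : Fin n → ℝ)
    (hv : ∀ j, 0 ≤ v j) (γ : Fin m → Fin n → ℝ) (hγ : γ ∈ GammaLe μ ν) :
    dotS S γ ≤ dualObj S μ ν v := by
  obtain ⟨h0, h1, h2⟩ := hγ
  have e1 : dotS S γ ≤ ∑ i, ∑ j, (v j * γ i j + γ i j * rowMax S v i) := by
    unfold dotS
    refine Finset.sum_le_sum fun i _ => Finset.sum_le_sum fun j _ => ?_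
    have := mul_le_mul_of_nonneg_right (le_rowMax S v i j) (h0 i j)
    linarith
  have e2 : ∑ i, ∑ j, (v j * γ i j + γ i j * rowMax S v i)
      = ∑ j, v j * ∑ i, γ i j + ∑ i, μ i * rowMax S v i := by
    simp_rw [Finset.sum_add_distrib, ← Finset.sum_mul, h1]
    rw [Finset.sum_comm]
    simp_rw [Finset.mul_sum]
  have e3 : ∑ j, v j * ∑ i, γ i j ≤ ∑ j, v j * ν j :=
    Finset.sum_le_sum fun j _ => mul_le_mul_of_nonneg_left (h2 j) (hv j)
  unfold dualObj
  linarith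

/-- Compact row polytope. -/
def rowPoly {m n : ℕ} (μ : Fin m → ℝ) : Set (Fin m → Fin n → ℝ) :=
  {γ | (∀ i j, 0 ≤ γ i j) ∧ (∀ i, ∑ j, γ i j = μ i)}

lemma rowPoly_convex {m n : ℕ} (μ : Fin m → ℝ) : Convex ℝ (rowPoly (n := n) μ) := by
  rintro x ⟨hx0, hx1⟩ y ⟨hy0, hy1⟩ a b ha hb hab
  refine ⟨fun i j => ?_, fun i => ?_⟩
  · have := mul_nonneg ha (hx0 i j)
    have := mul_nonneg hb (hy0 i j)
    simp only [Pi.add_apply, Pi.smul_apply, smul_eq_mul]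
    linarith
  · simp only [Pi.add_apply, Pi.smul_apply, smul_eq_mul, Finset.sum_add_distrib,
      ← Finset.mul_sum, hx1, hy1]
    rw [← add_mul, hab, one_mul]

lemma rowPoly_compact {m n : ℕ} (μ : Fin m → ℝ) : IsCompact (rowPoly (n := n) μ) := by
  have hc : IsCompact (Set.Icc (0 : Fin m → Fin n → ℝ) (fun i _ => μ i)) := isCompact_Icc
  refine hc.of_isClosed_subset ?_ ?_
  · unfold rowPoly
    rw [Set.ofPred_and]
    refine IsClosed.inter ?_ ?_
    · simp only [Set.ofPred_forall]
      exact isClosed_iInter fun i => isClosed_iInter fun j =>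
        isClosed_le continuous_const (by fun_prop)
    · simp only [Set.ofPred_forall]
      exact isClosed_iInter fun i => isClosed_eq (by fun_prop) continuous_const
  · rintro x ⟨h0, h1⟩
    refine ⟨fun i j => h0 i j, fun i j => ?_⟩
    show x i j ≤ μ i
    rw [← h1 i]
    exact Finset.single_le_sum (fun j _ => h0 i j) (Finset.mem_univ j)

/-- Value and column sums. -/
def evalMap {m n : ℕ} (S : Fin m → Fin n → ℝ) :
    (Fin m → Fin n → ℝ) →ₗ[ℝ] ℝ × (Fin n → ℝ) where
  toFun γ := (dotS S γ, fun j => ∑ i, γ i j)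
  map_add' x y := by
    ext
    · simp [dotS, mul_add, Finset.sum_add_distrib]
    · simp [Finset.sum_add_distrib]
  map_smul' c x := by
    ext
    · simp [dotS, Finset.mul_sum, mul_left_comm]
    · simp [Finset.mul_sum]

lemma strong_dual {m n : ℕ} (hn : 0 < n) (S : Fin m → Fin n → ℝ) (μ : Fin m → ℝ)
    (hμ : ∀ i, 0 ≤ μ i) (ν : Fin n → ℝ) (hne : (GammaLe μ ν).Nonempty) (t : ℝ)
    (ht : ∀ γ ∈ GammaLe μ ν, dotS S γ < t) :
    ∃ v : Fin n → ℝ, (∀ j, 0 ≤ v j) ∧ dualObj S μ ν v ≤ t := by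
  haveI : Nonempty (Fin n) := ⟨⟨0, hn⟩⟩
  have hcont : Continuous (evalMap S) := LinearMap.continuous_of_finiteDimensional _
  have hdis : Disjoint (evalMap S '' rowPoly μ) (Set.Ici t ×ˢ Set.Iic ν) := by
    rw [Set.disjoint_left]
    rintro _ ⟨γ, hγ, rfl⟩ ⟨h1, h2⟩
    exact absurd (ht γ ⟨hγ.1, hγ.2, fun j => h2 j⟩) (not_lt.2 h1)
  obtain ⟨f, u, w, hfu, huw, hfw⟩ := geometric_hahn_banach_compact_closed
    ((rowPoly_convex μ).linear_image (evalMap S)) ((rowPoly_compact μ).image hcont)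
    ((convex_Ici t).prod (convex_Iic ν)) (isClosed_Ici.prod isClosed_Iic) hdis
  set a : ℝ := f (1, 0) with ha
  set b : Fin n → ℝ := fun j => f (0, Pi.single j 1) with hb
  have hf : ∀ s c, f (s, c) = a * s + ∑ j, b j * c j := by
    intro s c
    have e : ((s, c) : ℝ × (Fin n → ℝ))
        = s • ((1 : ℝ), (0 : Fin n → ℝ)) + ∑ j, c j • ((0 : ℝ), (Pi.single j 1 : Fin n → ℝ)) := by
      ext k
      · simp [Prod.fst_sum]
      · simp [Prod.snd_sum, Finset.sum_apply, Pi.single_apply]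
    rw [e, map_add, map_sum]
    simp only [map_smul, smul_eq_mul, ← ha, hb]
    congr 1
    · ring
    · exact Finset.sum_congr rfl fun j _ => mul_comm _ _
  have hlow : ∀ γ ∈ rowPoly μ, a * dotS S γ + ∑ j, b j * ∑ i, γ i j < u := by
    intro γ hγ
    have := hfu _ ⟨γ, hγ, rfl⟩
    rwa [show evalMap S γ = (dotS S γ, fun j => ∑ i, γ i j) from rfl, hf] at this
  have hup : ∀ c : Fin n → ℝ, (∀ j, c j ≤ ν j) → w < a * t + ∑ j, b j * c j := by
    intro c hc
    have := hfw (t, c) ⟨le_refl t, hc⟩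
    rwa [hf] at this
  obtain ⟨γ0, h0⟩ := hne
  have hapos : 0 < a := by
    have h1 := hlow γ0 ⟨h0.1, h0.2.1⟩
    have h2 := hup _ h0.2.2
    have h3 := ht γ0 h0
    by_contra hcon
    nlinarith
  have hbneg : ∀ j, b j ≤ 0 := by
    intro k
    by_contra hcon
    push Not at hcon
    have hv := hup ν (fun _ => le_rfl)
    set D := a * t + ∑ j, b j * ν j - w with hD
    have h2 := hup (fun j => ν j - if j = k then D / b k else 0) (by
      intro j
      have : 0 ≤ D / b k := div_nonneg (by linarith) hcon.le
      split_ifs <;> linarith)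
    simp only [mul_sub, Finset.sum_sub_distrib, mul_ite, mul_zero, Finset.sum_ite_eq',
      Finset.mem_univ, if_true] at h2
    rw [mul_div_cancel₀ _ hcon.ne'] at h2
    linarith
  refine ⟨fun j => - b j / a, fun j => div_nonneg (by linarith [hbneg j]) hapos.le, ?_⟩
  set v : Fin n → ℝ := fun j => - b j / a with hvdef
  have hbv : ∀ j, b j = - (a * v j) := by
    intro j
    simp only [hvdef]
    field_simp
  have hmax : ∀ i, ∃ j, S i j - v j = rowMax S v i := fun i =>
    exists_eq_ciSup_of_finite (f := fun j => S i j - v j)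
  choose σ hσ using hmax
  have h1 := hlow (fun i j => if j = σ i then μ i else 0) ⟨fun i j => by
    dsimp only
    split_ifs
    · exact hμ i
    · exact le_rfl, fun i => by simp⟩
  have h2 := hup ν (fun _ => le_rfl)
  have e1 : dotS S (fun i j => if j = σ i then μ i else 0) = ∑ i, S i (σ i) * μ i := by
    simp [dotS]
  have e2 : ∑ j, b j * ∑ i, (if j = σ i then μ i else 0) = - (a * ∑ i, v (σ i) * μ i) := by
    simp_rw [Finset.mul_sum]
    rw [Finset.sum_comm, ← Finset.sum_neg_distrib]
    refine Finset.sum_congr rfl fun i _ => ?_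
    simp [hbv, mul_assoc]
  have e3 : ∑ j, b j * ν j = - (a * ∑ j, v j * ν j) := by
    rw [Finset.mul_sum, ← Finset.sum_neg_distrib]
    refine Finset.sum_congr rfl fun j _ => ?_
    rw [hbv]
    ring
  have e4 : ∑ i, μ i * rowMax S v i = ∑ i, S i (σ i) * μ i - ∑ i, v (σ i) * μ i := by
    rw [← Finset.sum_sub_distrib]
    refine Finset.sum_congr rfl fun i _ => ?_
    rw [← hσ]
    ring
  rw [e1, e2] at h1
  rw [e3] at h2
  unfold dualObj
  rw [e4]
  have h3 : a * (∑ j, v j * ν j + (∑ i, S i (σ i) * μ i - ∑ i, v (σ i) * μ i)) ≤ a * t := by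
    linarith
  exact le_of_mul_le_mul_left h3 hapos

lemma GammaLe_nonempty {m n : ℕ} (hn : 0 < n) (l : ℕ) (hl : 0 < l) (hlm : m ≤ l)
    (P : Finset (Fin m)) :
    (GammaLe (fun i => indVec P i / (l : ℝ)) (fun _ : Fin n => 1 / (n : ℝ))).Nonempty := by
  have hn' : (0 : ℝ) < n := by exact_mod_cast hn
  have hl' : (0 : ℝ) < l := by exact_mod_cast hl
  have hi : ∀ i, 0 ≤ indVec P i ∧ indVec P i ≤ 1 := by
    intro i
    unfold indVec
    split_ifs <;> norm_num
  refine ⟨fun i _ => indVec P i / l / n, fun i j => ?_, fun i => ?_, fun j => ?_⟩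
  · have := (hi i).1
    positivity
  · simp only [Finset.sum_const, Finset.card_univ, Fintype.card_fin, nsmul_eq_mul]
    field_simp
  · rw [← Finset.sum_div, ← Finset.sum_div]
    refine div_le_div_of_nonneg_right ?_ hn'.le
    rw [div_le_one hl']
    calc ∑ i, indVec P i ≤ ∑ _i : Fin m, (1 : ℝ) := Finset.sum_le_sum fun i _ => (hi i).2
      _ = m := by simp
      _ ≤ l := by exact_mod_cast hlm

/-- for `l ≥ m`, the set function
`ψ(P) = max_{γ ∈ Γ_≤((1/l)·1_P, (1/n)𝟙)} ⟨S,γ⟩` is submodular. -/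
theorem stmt_6 (m n : ℕ) (hm : 0 < m) (hn : 0 < n)
    (S : Fin m → Fin n → ℝ) (hS : ∀ i j, 0 ≤ S i j)
    (l : ℕ) (hl : 0 < l) (hlm : m ≤ l)
    (ψ : Finset (Fin m) → ℝ)
    (hψ : ∀ P : Finset (Fin m),
      ψ P = sSup (dotS S ''
        GammaLe (fun i => indVec P i / (l : ℝ)) (fun _ => 1 / (n : ℝ))))
    (A B : Finset (Fin m)) :
    ψ (A ∪ B) + ψ (A ∩ B) ≤ ψ A + ψ B := by
  haveI : Nonempty (Fin n) := ⟨⟨0, hn⟩⟩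
  have hl' : (0 : ℝ) < l := by exact_mod_cast hl
  have hμ : ∀ P : Finset (Fin m), ∀ i, 0 ≤ indVec P i / (l : ℝ) := by
    intro P i
    unfold indVec
    split_ifs <;> positivity
  have hup : ∀ (P : Finset (Fin m)) (v : Fin n → ℝ), (∀ j, 0 ≤ v j) →
      ψ P ≤ dualObj S (fun i => indVec P i / (l : ℝ)) (fun _ => 1 / (n : ℝ)) v := by
    intro P v hv
    rw [hψ]
    refine csSup_le ((GammaLe_nonempty hn l hl hlm P).image _) ?_
    rintro _ ⟨γ, hγ, rfl⟩
    exact weak_dual S _ _ v hv γ hγ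
  have hlow : ∀ (P : Finset (Fin m)) (ε : ℝ), 0 < ε → ∃ v : Fin n → ℝ, (∀ j, 0 ≤ v j) ∧
      dualObj S (fun i => indVec P i / (l : ℝ)) (fun _ => 1 / (n : ℝ)) v ≤ ψ P + ε := by
    intro P ε hε
    refine strong_dual hn S _ (hμ P) _ (GammaLe_nonempty hn l hl hlm P) _ fun γ hγ => ?_
    have : dotS S γ ≤ ψ P := by
      rw [hψ]
      refine le_csSup ⟨dualObj S (fun i => indVec P i / (l : ℝ)) (fun _ => 1 / (n : ℝ)) (fun _ => 0), ?_⟩ ⟨γ, hγ, rfl⟩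
      rintro _ ⟨γ', hγ', rfl⟩
      exact weak_dual S _ _ _ (fun _ => le_rfl) γ' hγ'
    linarith
  refine le_of_forall_pos_le_add fun ε hε => ?_
  obtain ⟨v, hv, hvA⟩ := hlow A (ε / 2) (by linarith)
  obtain ⟨w, hw, hwB⟩ := hlow B (ε / 2) (by linarith)
  have hU := hup (A ∪ B) (fun j => max (v j) (w j)) (fun j => le_max_of_le_left (hv j))
  have hI := hup (A ∩ B) (fun j => min (v j) (w j)) (fun j => le_min (hv j) (hw j))
  set vU : Fin n → ℝ := fun j => max (v j) (w j) with hvU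
  set vI : Fin n → ℝ := fun j => min (v j) (w j) with hvI
  have hUv : ∀ i, rowMax S vU i ≤ rowMax S v i := fun i => ciSup_le fun j =>
    le_trans (sub_le_sub_left (le_max_left _ _) _) (le_rowMax S v i j)
  have hUw : ∀ i, rowMax S vU i ≤ rowMax S w i := fun i => ciSup_le fun j =>
    le_trans (sub_le_sub_left (le_max_right _ _) _) (le_rowMax S w i j)
  have hIm : ∀ i, rowMax S vI i ≤ max (rowMax S v i) (rowMax S w i) := fun i => ciSup_le fun j => by
    simp only [hvI]
    rcases min_choice (v j) (w j) with h | h <;> rw [h]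
    · exact le_max_of_le_left (le_rowMax S v i j)
    · exact le_max_of_le_right (le_rowMax S w i j)
  have hsum : ∀ i, rowMax S vU i + rowMax S vI i ≤ rowMax S v i + rowMax S w i := by
    intro i
    have h1 := hUv i
    have h2 := hUw i
    have h3 := hIm i
    rcases max_choice (rowMax S v i) (rowMax S w i) with h | h <;> rw [h] at h3 <;> linarith
  have key : dualObj S (fun i => indVec (A ∪ B) i / (l : ℝ)) (fun _ => 1 / (n : ℝ)) vU
      + dualObj S (fun i => indVec (A ∩ B) i / (l : ℝ)) (fun _ => 1 / (n : ℝ)) vI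
      ≤ dualObj S (fun i => indVec A i / (l : ℝ)) (fun _ => 1 / (n : ℝ)) v
      + dualObj S (fun i => indVec B i / (l : ℝ)) (fun _ => 1 / (n : ℝ)) w := by
    unfold dualObj
    have e1 : ∑ j, vU j * (1 / (n : ℝ)) + ∑ j, vI j * (1 / (n : ℝ))
        = ∑ j, v j * (1 / (n : ℝ)) + ∑ j, w j * (1 / (n : ℝ)) := by
      rw [← Finset.sum_add_distrib, ← Finset.sum_add_distrib]
      refine Finset.sum_congr rfl fun j _ => ?_
      rw [← add_mul, ← add_mul, max_add_min]
    have e2 : ∑ i, indVec (A ∪ B) i / (l : ℝ) * rowMax S vU i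
        + ∑ i, indVec (A ∩ B) i / (l : ℝ) * rowMax S vI i
        ≤ ∑ i, indVec A i / (l : ℝ) * rowMax S v i
        + ∑ i, indVec B i / (l : ℝ) * rowMax S w i := by
      rw [← Finset.sum_add_distrib, ← Finset.sum_add_distrib]
      refine Finset.sum_le_sum fun i _ => ?_
      have hp : 0 ≤ 1 / (l : ℝ) := by positivity
      have h1 := mul_le_mul_of_nonneg_left (hUv i) hp
      have h2 := mul_le_mul_of_nonneg_left (hUw i) hp
      have h3 := mul_le_mul_of_nonneg_left (hsum i) hp
      by_cases hA : i ∈ A <;> by_cases hB : i ∈ B <;> simp [indVec, hA, hB] at h1 h2 h3 ⊢ <;>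
        linarith
    linarith
  linarith
end
end

section
/- The set function f is nonnegative and monotone on sets of cardinality at most k: for all subsets P₁ ⊆ P₂ of {1,…,m} with |P₂| ≤ k, 0 ≤ f(P₁) ≤ f(P₂). -/
open Finset

noncomputable section

/-- `f` is nonnegative and monotone on sets of cardinality at most `k`. -/
theorem stmt_7 (m n k : ℕ) (hm : 0 < m) (hn : 0 < n) (hk : 0 < k)
    (hkm : k ≤ m) (hkn : k ≤ n)
    (S : Fin m → Fin n → ℝ) (hS : ∀ i j, 0 ≤ S i j)
    (P₁ P₂ : Finset (Fin m)) (hsub : P₁ ⊆ P₂) (hcard : P₂.card ≤ k) :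
    0 ≤ fval k S P₁ ∧ fval k S P₁ ≤ fval k S P₂ := by
  have hnn : ∀ P : Finset (Fin m), 0 ≤ fval k S P := by
    intro P
    apply Real.sSup_nonneg
    rintro x ⟨γ, hγ, rfl⟩
    exact Finset.sum_nonneg fun i _ => Finset.sum_nonneg fun j _ =>
      mul_nonneg (hS i j) (hγ.1 i j)
  refine ⟨hnn P₁, ?_⟩
  have hbdd : BddAbove (dotS S '' GammaLe (indVec P₂) (fun _ => (k : ℝ) / (n : ℝ))) := by
    refine ⟨∑ i, ∑ j, S i j, ?_⟩
    rintro x ⟨γ, hγ, rfl⟩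
    refine Finset.sum_le_sum fun i _ => Finset.sum_le_sum fun j _ => ?_
    have h1 : γ i j ≤ ∑ j, γ i j :=
      Finset.single_le_sum (f := fun j => γ i j) (fun j _ => hγ.1 i j) (Finset.mem_univ j)
    have h2 : indVec P₂ i ≤ 1 := by
      unfold indVec
      split_ifs <;> norm_num
    have h3 := hγ.2.1 i
    exact mul_le_of_le_one_right (hS i j) (by linarith)
  refine Real.sSup_le ?_ (hnn P₂)
  rintro x ⟨γ, ⟨h0, hr, hc⟩, rfl⟩
  have hnR : (n : ℝ) ≠ 0 := by positivity
  have hc1 : P₁.card ≤ P₂.card := Finset.card_le_card hsub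
  have hdR : (0 : ℝ) ≤ (k : ℝ) - P₁.card := by
    have : (P₁.card : ℝ) ≤ k := by exact_mod_cast hc1.trans hcard
    linarith
  have hsd : ((P₂ \ P₁).card : ℝ) ≤ (k : ℝ) - P₁.card := by
    have h := Finset.card_sdiff_add_card_eq_card hsub
    have h' : ((P₂ \ P₁).card : ℝ) + P₁.card ≤ k := by exact_mod_cast h.le.trans hcard
    linarith
  have hslack : ∀ j, 0 ≤ (k : ℝ) / n - ∑ i, γ i j := fun j => sub_nonneg.2 (hc j)
  have htot : ∑ j, ((k : ℝ) / n - ∑ i, γ i j) = (k : ℝ) - P₁.card := by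
    rw [Finset.sum_sub_distrib, Finset.sum_comm, Finset.sum_congr rfl fun i _ => hr i]
    have hP : ∑ i, indVec P₁ i = (P₁.card : ℝ) := by
      simp only [indVec]
      simp
    rw [hP]
    simp
    field_simp
  let e : Fin m → Fin n → ℝ := fun i j =>
    if i ∈ P₂ \ P₁ then ((k : ℝ) / n - ∑ i, γ i j) / ((k : ℝ) - P₁.card) else 0
  have he : ∀ i j, 0 ≤ e i j := by
    intro i j
    simp only [e]
    split_ifs
    · exact div_nonneg (hslack j) hdR
    · exact le_rfl
  have hmem : (fun i j => γ i j + e i j) ∈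
      GammaLe (indVec P₂) (fun _ : Fin n => (k : ℝ) / (n : ℝ)) := by
    refine ⟨fun i j => add_nonneg (h0 i j) (he i j), fun i => ?_, fun j => ?_⟩
    · rw [Finset.sum_add_distrib, hr i]
      by_cases hi : i ∈ P₂ \ P₁
      · have hpos : (0 : ℝ) < (P₂ \ P₁).card := by
          exact_mod_cast Finset.card_pos.2 ⟨i, hi⟩
        simp only [e, if_pos hi]
        rw [← Finset.sum_div, htot, div_self (by linarith)]
        rw [Finset.mem_sdiff] at hi
        simp [indVec, hi.1, hi.2]
      · simp only [e, if_neg hi, Finset.sum_const_zero, add_zero]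
        rw [Finset.mem_sdiff] at hi
        have : i ∈ P₁ ↔ i ∈ P₂ := ⟨fun h => hsub h, fun h => by tauto⟩
        simp [indVec, this]
    · rw [Finset.sum_add_distrib]
      have : ∑ i, e i j ≤ (k : ℝ) / n - ∑ i, γ i j := by
        simp only [e]
        rw [Finset.sum_ite_mem, Finset.univ_inter, Finset.sum_const, nsmul_eq_mul,
          mul_div_assoc', mul_comm, mul_div_assoc]
        exact mul_le_of_le_one_right (hslack j) (div_le_one_of_le₀ hsd hdR)
      linarith
  refine le_trans ?_ (le_csSup hbdd ⟨_, hmem, rfl⟩)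
  exact Finset.sum_le_sum fun i _ => Finset.sum_le_sum fun j _ =>
    mul_le_mul_of_nonneg_left (le_add_of_nonneg_right (he i j)) (hS i j)
end
end

section
/- Sharpened monotonicity of f: let P ⊆ {1,…,m} with |P| < k, let i ∈ {1,…,m} with i ∉ P, let γ_P ∈ Γ_≤(1_P,(k/n)𝟙) be a coupling attaining f(P), and set v = (k/n)𝟙 − γ_Pᵀ𝟙 ∈ ℝ_{≥0}^n (whose entries sum to k − |P| ≥ 1). Then f(P ∪ {i}) ≥ f(P) + (1/(k − |P|)) · ⟨S(i,·), v⟩, where S(i,·) denotes the i-th row of S. -/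
open Finset

noncomputable section

/-- sharpened monotonicity of `f`: with `γ_P` attaining `f(P)` and
`v = (k/n)𝟙 − γ_Pᵀ𝟙`, one has
`f(P ∪ {i}) ≥ f(P) + (1/(k − |P|))·⟨S(i,·), v⟩`. -/
theorem stmt_9 (m n k : ℕ) (hm : 0 < m) (hn : 0 < n) (hk : 0 < k)
    (hkm : k ≤ m) (hkn : k ≤ n)
    (S : Fin m → Fin n → ℝ) (hS : ∀ i j, 0 ≤ S i j)
    (P : Finset (Fin m)) (hP : P.card < k)
    (i : Fin m) (hi : i ∉ P)
    (γP : Fin m → Fin n → ℝ)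
    (hγ : γP ∈ GammaLe (indVec P) (fun _ => (k : ℝ) / (n : ℝ)))
    (hopt : dotS S γP = fval k S P) :
    fval k S P +
      (1 / ((k : ℝ) - (P.card : ℝ))) *
        ∑ j, S i j * ((k : ℝ) / (n : ℝ) - ∑ l, γP l j) ≤
    fval k S (insert i P) := by 
  obtain ⟨h0, h1, h2⟩ := hγ
  have hc : (1 : ℝ) ≤ (k : ℝ) - (P.card : ℝ) := by
    have : (P.card : ℝ) + 1 ≤ k := by exact_mod_cast hP
    linarith
  have hn' : (n : ℝ) ≠ 0 := by exact_mod_cast hn.ne'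
  have hcpos : (0 : ℝ) < (k : ℝ) - (P.card : ℝ) := by linarith
  set c : ℝ := 1 / ((k : ℝ) - (P.card : ℝ)) with hcdef
  have hc0 : 0 ≤ c := by positivity
  have hc1 : c ≤ 1 := by
    rw [hcdef, div_le_one hcpos]; exact hc
  set v : Fin n → ℝ := fun j => (k : ℝ) / (n : ℝ) - ∑ l, γP l j with hv
  have hv0 : ∀ j, 0 ≤ v j := fun j => sub_nonneg.2 (h2 j)
  have hvsum : ∑ j, v j = (k : ℝ) - (P.card : ℝ) := by
    have e : ∑ j, ∑ l, γP l j = (P.card : ℝ) := by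
      have e2 : ∑ l, ∑ j, γP l j = ∑ l, indVec P l := Finset.sum_congr rfl (fun l _ => h1 l)
      rw [Finset.sum_comm, e2]
      unfold indVec
      simp
    simp only [hv]
    rw [Finset.sum_sub_distrib, e]
    simp
    field_simp
  set γ' : Fin m → Fin n → ℝ := fun l j => γP l j + (if l = i then c * v j else 0) with hγ'
  have hmem : γ' ∈ GammaLe (indVec (insert i P)) (fun _ => (k : ℝ) / (n : ℝ)) := by
    refine ⟨fun l j => ?_, fun l => ?_, fun j => ?_⟩
    · have := mul_nonneg hc0 (hv0 j)
      have := h0 l j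
      simp only [hγ']
      split_ifs <;> linarith
    · simp only [hγ']
      rw [Finset.sum_add_distrib, h1 l]
      by_cases hl : l = i
      · subst hl
        simp only [if_true, ← Finset.mul_sum, hvsum]
        simp only [indVec, hi, if_false, Finset.mem_insert_self, if_true, hcdef]
        field_simp
        ring
      · simp [indVec, hl]
    · simp only [hγ']
      rw [Finset.sum_add_distrib]
      simp only [Finset.sum_ite_eq', Finset.mem_univ, if_true]
      have h3 : c * v j ≤ v j := mul_le_of_le_one_left (hv0 j) hc1
      have h4 : v j = (k : ℝ) / (n : ℝ) - ∑ l, γP l j := rfl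
      linarith
  have hdot : dotS S γ' = dotS S γP + c * ∑ j, S i j * v j := by
    simp only [dotS, hγ', mul_add, Finset.sum_add_distrib]
    congr 1
    rw [Finset.sum_eq_single i]
    · rw [Finset.mul_sum]
      refine Finset.sum_congr rfl fun j _ => ?_
      simp only [if_true]
      ring
    · intro l _ hl
      simp [hl]
    · simp
  have hbdd : BddAbove (dotS S '' GammaLe (indVec (insert i P)) (fun _ => (k : ℝ) / (n : ℝ))) := by
    refine ⟨∑ l, ∑ j, S l j * ((k : ℝ) / (n : ℝ)), ?_⟩
    rintro _ ⟨γ, ⟨g0, _, g2⟩, rfl⟩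
    refine Finset.sum_le_sum fun l _ => Finset.sum_le_sum fun j _ => ?_
    refine mul_le_mul_of_nonneg_left (le_trans ?_ (g2 j)) (hS l j)
    exact Finset.single_le_sum (f := fun l => γ l j) (fun a _ => g0 a j) (Finset.mem_univ l)
  rw [← hopt]
  calc dotS S γP + c * ∑ j, S i j * v j = dotS S γ' := hdot.symm
    _ ≤ fval k S (insert i P) := le_csSup hbdd ⟨γ', hmem, rfl⟩
end
end

section
/- Equivalence of the two cardinality-constrained problems: let P* be a subset of {1,…,m} with |P*| = k. Then h(P*) ≥ h(P) for every subset P of {1,…,m} with |P| ≤ k if and only if f(P*) ≥ f(P) for every subset P of {1,…,m} with |P| ≤ k. -/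
open Finset

noncomputable section

theorem indVec_sum {m : ℕ} (P : Finset (Fin m)) : ∑ i, indVec P i = (P.card : ℝ) := by
  simp [indVec]

theorem bdd_GammaLe {m n : ℕ} (S : Fin m → Fin n → ℝ) (hS : ∀ i j, 0 ≤ S i j)
    (P : Finset (Fin m)) (ν : Fin n → ℝ) : BddAbove (dotS S '' GammaLe (indVec P) ν) := by
  refine ⟨∑ i, ∑ j, S i j, ?_⟩
  rintro _ ⟨γ, ⟨h0, h1, -⟩, rfl⟩
  refine Finset.sum_le_sum fun i _ => Finset.sum_le_sum fun j _ => ?_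
  have h2 : γ i j ≤ ∑ j, γ i j :=
    Finset.single_le_sum (f := fun j => γ i j) (fun j _ => h0 i j) (Finset.mem_univ j)
  have h3 : indVec P i ≤ 1 := by
    unfold indVec; split_ifs <;> norm_num
  have h4 := h1 i
  exact mul_le_of_le_one_right (hS i j) (by linarith)

theorem Gamma_sub {m n : ℕ} (μ : Fin m → ℝ) (ν ν' : Fin n → ℝ) (h : ∀ j, ν j ≤ ν' j) :
    Gamma μ ν ⊆ GammaLe μ ν' := fun _ ⟨h0, h1, h2⟩ => ⟨h0, h1, fun j => (h2 j).trans_le (h j)⟩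

theorem hval_le_fval {m n k : ℕ} (hn : 0 < n) (S : Fin m → Fin n → ℝ) (hS : ∀ i j, 0 ≤ S i j)
    (P : Finset (Fin m)) (hP : P.card ≤ k) : hval S P ≤ fval k S P := by
  refine csSup_le_csSup (bdd_GammaLe S hS P _) ((Gamma_nonempty hn P).image _)
    (Set.image_mono (Gamma_sub _ _ _ fun j => ?_))
  have : (P.card : ℝ) ≤ k := by exact_mod_cast hP
  gcongr

theorem fval_le_hval {m n k : ℕ} (hn : 0 < n) (S : Fin m → Fin n → ℝ) (hS : ∀ i j, 0 ≤ S i j)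
    (P Q : Finset (Fin m)) (hPQ : P ⊆ Q) (hQ : Q.card = k) : fval k S P ≤ hval S Q := by
  have hn' : (n : ℝ) ≠ 0 := by positivity
  have hPk : P.card ≤ k := hQ ▸ Finset.card_le_card hPQ
  have hPk' : (P.card : ℝ) ≤ k := by exact_mod_cast hPk
  refine csSup_le (((Gamma_nonempty hn P).mono (Gamma_sub _ _ _ fun j => ?_)).image _) ?_
  · gcongr
  rintro _ ⟨γ, ⟨h0, h1, h2⟩, rfl⟩
  have hr : ∀ j, 0 ≤ (k : ℝ) / n - ∑ i, γ i j := fun j => sub_nonneg.2 (h2 j)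
  have hrs : ∑ j, ((k : ℝ) / n - ∑ i, γ i j) = k - P.card := by
    rw [Finset.sum_sub_distrib, Finset.sum_comm, Finset.sum_congr rfl fun i _ => h1 i, indVec_sum]
    simp; field_simp
  have hcs : ((Q \ P).card : ℝ) = k - P.card := by
    rw [Finset.card_sdiff_of_subset hPQ, hQ, Nat.cast_sub hPk]
  have hadd : ∀ i, indVec P i + indVec (Q \ P) i = indVec Q i := by
    intro i
    by_cases a : i ∈ P
    · simp [indVec, a, hPQ a]
    · simp [indVec, a]
  have hnn : ∀ i, 0 ≤ indVec (Q \ P) i := by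
    intro i; unfold indVec; split_ifs <;> norm_num
  have hkP : (0 : ℝ) ≤ k - P.card := by linarith
  have hb : BddAbove (dotS S '' Gamma (indVec Q) (fun _ => (Q.card : ℝ) / (n : ℝ))) :=
    (bdd_GammaLe S hS Q _).mono (Set.image_mono (Gamma_sub _ _ _ fun j => le_rfl))
  have hpos : ∀ i j, 0 ≤ indVec (Q \ P) i * (((k : ℝ) / n - ∑ i, γ i j) / (k - P.card)) :=
    fun i j => mul_nonneg (hnn i) (div_nonneg (hr j) hkP)
  refine le_trans ?_ (le_csSup hb ⟨fun i j => γ i j +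
    indVec (Q \ P) i * (((k : ℝ) / n - ∑ i, γ i j) / (k - P.card)), ⟨?_, ?_, ?_⟩, rfl⟩)
  · refine Finset.sum_le_sum fun i _ => Finset.sum_le_sum fun j _ => ?_
    have := hpos i j
    exact mul_le_mul_of_nonneg_left (by linarith) (hS i j)
  · exact fun i j => add_nonneg (h0 i j) (hpos i j)
  · intro i
    rw [Finset.sum_add_distrib, ← Finset.mul_sum, ← Finset.sum_div, hrs, h1, ← hadd]
    by_cases hz : (k : ℝ) - P.card = 0
    · have : Q \ P = ∅ := by
        rw [← Finset.card_eq_zero]; rw [hz] at hcs; exact_mod_cast hcs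
      simp [this, indVec]
    · rw [div_self hz, mul_one]
  · intro j
    rw [Finset.sum_add_distrib, ← Finset.sum_mul, indVec_sum, hcs, hQ]
    by_cases hz : (k : ℝ) - P.card = 0
    · rw [hz] at hrs ⊢
      have := (Finset.sum_eq_zero_iff_of_nonneg fun j _ => hr j).1 hrs j (Finset.mem_univ j)
      linarith
    · field_simp; ring

/-- a set `P*` of cardinality `k` maximizes `h` over sets of
cardinality at most `k` iff it maximizes `f` over sets of cardinality at most `k`. -/
theorem stmt_12 (m n k : ℕ) (hm : 0 < m) (hn : 0 < n) (hk : 0 < k)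
    (hkm : k ≤ m) (hkn : k ≤ n)
    (S : Fin m → Fin n → ℝ) (hS : ∀ i j, 0 ≤ S i j)
    (Pstar : Finset (Fin m)) (hcard : Pstar.card = k) :
    (∀ P : Finset (Fin m), P.card ≤ k → hval S P ≤ hval S Pstar) ↔
    (∀ P : Finset (Fin m), P.card ≤ k → fval k S P ≤ fval k S Pstar) := by
  have e : fval k S Pstar = hval S Pstar :=
    le_antisymm (fval_le_hval hn S hS _ _ subset_rfl hcard) (hval_le_fval hn S hS _ hcard.le)
  constructor
  · intro H P hP
    obtain ⟨Q, hPQ, hQ⟩ := Finset.exists_superset_card_eq hP (by simpa using hkm)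
    rw [e]
    exact (fval_le_hval hn S hS P Q hPQ hQ).trans (H Q hQ.le)
  · intro H P hP
    rw [← e]
    exact (hval_le_fval hn S hS P hP).trans (H P hP)
end
end

section
/- Transfer of the (1 − 1/e) approximation guarantee: let OPT = max{h(P) : P ⊆ {1,…,m}, |P| ≤ k}, and let P̂ be a subset of {1,…,m} with |P̂| = k such that f(P̂) ≥ (1 − 1/e) · max{f(P) : P ⊆ {1,…,m}, |P| ≤ k} (as is guaranteed for the classical greedy solution of the submodular problem). Then h(P̂) ≥ (1 − 1/e) · OPT. -/
open Finset

noncomputable section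

theorem bddAbove_aux {m n : ℕ} (S : Fin m → Fin n → ℝ) (hS : ∀ i j, 0 ≤ S i j) (k : ℕ)
    (P : Finset (Fin m)) :
    BddAbove (dotS S '' GammaLe (indVec P) (fun _ => (k : ℝ) / (n : ℝ))) := by
  refine ⟨∑ i, ∑ j, S i j, ?_⟩
  rintro _ ⟨γ, ⟨h0, h1, _⟩, rfl⟩
  refine Finset.sum_le_sum fun i _ => Finset.sum_le_sum fun j _ => ?_
  have h2 : γ i j ≤ 1 := by
    calc γ i j ≤ ∑ j, γ i j :=
          Finset.single_le_sum (fun j _ => h0 i j) (Finset.mem_univ j)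
      _ = indVec P i := h1 i
      _ ≤ 1 := by unfold indVec; split_ifs <;> norm_num
  exact mul_le_of_le_one_right (hS i j) h2

theorem gamma_nonempty {m n : ℕ} (hn : 0 < n) (P : Finset (Fin m)) :
    (Gamma (n := n) (indVec P) (fun _ => (P.card : ℝ) / (n : ℝ))).Nonempty := by
  have hn' : (n : ℝ) ≠ 0 := by positivity
  refine ⟨fun i _ => indVec P i / n, fun i j => ?_, fun i => ?_, fun j => ?_⟩
  · simp only [indVec]; split_ifs <;> positivity
  · simp; field_simp
  · rw [← Finset.sum_div]; simp [indVec]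

/-- transfer of the `(1 − 1/e)` approximation guarantee from `f` to `h`. -/
theorem stmt_13 (m n k : ℕ) (hm : 0 < m) (hn : 0 < n) (hk : 0 < k)
    (hkm : k ≤ m) (hkn : k ≤ n)
    (S : Fin m → Fin n → ℝ) (hS : ∀ i j, 0 ≤ S i j)
    (Phat : Finset (Fin m)) (hcard : Phat.card = k)
    (hgreedy : (1 - 1 / Real.exp 1) *
        sSup {x : ℝ | ∃ P : Finset (Fin m), P.card ≤ k ∧ x = fval k S P} ≤
      fval k S Phat) :
    (1 - 1 / Real.exp 1) *
        sSup {x : ℝ | ∃ P : Finset (Fin m), P.card ≤ k ∧ x = hval S P} ≤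
      hval S Phat := by
  have hbdd : ∀ P : Finset (Fin m),
      BddAbove (dotS S '' GammaLe (indVec P) (fun _ => (k : ℝ) / (n : ℝ))) :=
    fun P => bddAbove_aux S hS k P
  have hfin : ∀ g : Finset (Fin m) → ℝ,
      BddAbove {x : ℝ | ∃ P : Finset (Fin m), P.card ≤ k ∧ x = g P} := by
    intro g
    refine ((Set.finite_range g).subset ?_).bddAbove
    rintro x ⟨P, _, rfl⟩
    exact ⟨P, rfl⟩
  have hle : sSup {x : ℝ | ∃ P : Finset (Fin m), P.card ≤ k ∧ x = hval S P} ≤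
      sSup {x : ℝ | ∃ P : Finset (Fin m), P.card ≤ k ∧ x = fval k S P} := by
    apply csSup_le
    · exact ⟨_, ∅, by simp, rfl⟩
    · rintro x ⟨P, hP, rfl⟩
      refine le_trans ?_ (le_csSup (hfin (fval k S)) ⟨P, hP, rfl⟩)
      refine csSup_le_csSup (hbdd P) ((gamma_nonempty hn P).image _) (Set.image_mono ?_)
      rintro γ ⟨h0, h1, h2⟩
      refine ⟨h0, h1, fun j => ?_⟩
      rw [h2 j]
      have : (P.card : ℝ) ≤ k := by exact_mod_cast hP
      exact div_le_div_of_nonneg_right this (Nat.cast_nonneg n)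
  have heq : fval k S Phat = hval S Phat := by
    unfold fval hval
    congr 2
    ext γ
    constructor
    · rintro ⟨h0, h1, h2⟩
      refine ⟨h0, h1, ?_⟩
      have htot : ∑ j, ∑ i, γ i j = ∑ _j : Fin n, (k : ℝ) / n := by
        rw [Finset.sum_comm, Finset.sum_congr rfl (fun i _ => h1 i)]
        have : (n : ℝ) ≠ 0 := by positivity
        have h3 : ∑ i, indVec Phat i = (k : ℝ) := by
          simp only [indVec]
          simp [hcard]
        rw [h3]
        simp
        field_simp
      intro j
      rw [hcard]
      exact (Finset.sum_eq_sum_iff_of_le (fun j _ => h2 j)).1 htot j (Finset.mem_univ j)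
    · rintro ⟨h0, h1, h2⟩
      refine ⟨h0, h1, fun j => ?_⟩
      rw [h2 j, hcard]
  rw [← heq]
  refine le_trans (mul_le_mul_of_nonneg_left hle ?_) hgreedy
  have h1 : (1 : ℝ) ≤ Real.exp 1 := Real.one_le_exp (by norm_num)
  have := (div_le_one (by positivity)).2 h1
  linarith
end
end

section
/- Upper bound on the true marginal gain of f: for every subset P of {1,…,m} with |P| < k and every j ∈ {1,…,m} with j ∉ P, f(P ∪ {j}) − f(P) ≤ max{⟨S(j,·), v⟩ : v ∈ ℝ_{≥0}^n, Σ_{i=1}^n v_i = 1, v ≤ (k/n)𝟙} ≤ α_{j,max}, where S(j,·) denotes the j-th row of S. -/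
open Finset

noncomputable section

/-- Sum of the `t` largest entries of `s`, as the maximum of `∑_{i ∈ T} s i`
over subsets `T` of cardinality `t`. -/
def topSum {n : ℕ} (t : ℕ) (s : Fin n → ℝ) : ℝ :=
  sSup {x : ℝ | ∃ T : Finset (Fin n), T.card = t ∧ x = ∑ i ∈ T, s i}

/-- Sum of the `t` smallest entries of `s`, as the minimum of `∑_{i ∈ T} s i`
over subsets `T` of cardinality `t`. -/
def botSum {n : ℕ} (t : ℕ) (s : Fin n → ℝ) : ℝ :=
  sInf {x : ℝ | ∃ T : Finset (Fin n), T.card = t ∧ x = ∑ i ∈ T, s i}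

/-- `α_{j,max} = (1/⌊n/k⌋)·(sum of the ⌊n/k⌋ largest entries of row j of S)`. -/
def alphaMax {m n : ℕ} (k : ℕ) (S : Fin m → Fin n → ℝ) (j : Fin m) : ℝ :=
  (1 / ((n / k : ℕ) : ℝ)) * topSum (n / k) (S j)

/-- `α_{j,min} = (1/⌊n/k⌋)·(sum of the ⌊n/k⌋ smallest entries of row j of S)`. -/
def alphaMin {m n : ℕ} (k : ℕ) (S : Fin m → Fin n → ℝ) (j : Fin m) : ℝ :=
  (1 / ((n / k : ℕ) : ℝ)) * botSum (n / k) (S j)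

/-- Approximate marginal gain
`f̂(x_j ∣ P) = max{⟨S(j,·), v⟩ : v ≥ 0, 𝟙ᵀv = 1, v ≤ (k/n)𝟙 − γ_Pᵀ𝟙}`. -/
def fhat {m n : ℕ} (k : ℕ) (S : Fin m → Fin n → ℝ)
    (γP : Fin m → Fin n → ℝ) (j : Fin m) : ℝ :=
  sSup {x : ℝ | ∃ v : Fin n → ℝ, (∀ i, 0 ≤ v i) ∧ (∑ i, v i = 1) ∧
    (∀ i, v i ≤ (k : ℝ) / (n : ℝ) - ∑ l, γP l i) ∧ x = ∑ i, S j i * v i}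

theorem aux_top {n t : ℕ} (ht : 0 < t) (htn : t ≤ n) (s v : Fin n → ℝ)
    (hv0 : ∀ i, 0 ≤ v i) (hv1 : ∑ i, v i = 1) (hv : ∀ i, v i ≤ 1 / (t : ℝ)) :
    ∑ i, s i * v i ≤ (1 / (t : ℝ)) * topSum t s := by
  have htR : (0 : ℝ) < t := by exact_mod_cast ht
  have hne : (powersetCard t (univ : Finset (Fin n))).Nonempty := by
    apply powersetCard_nonempty.2
    simpa using htn
  obtain ⟨T, hT, hmax⟩ := exists_max_image _ (fun T => ∑ i ∈ T, s i) hne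
  have hTc : T.card = t := (mem_powersetCard.1 hT).2
  have hTne : T.Nonempty := card_pos.1 (by omega)
  obtain ⟨a, ha, hmin⟩ := exists_min_image T s hTne
  have hout : ∀ b, b ∉ T → s b ≤ s a := by
    intro b hb
    have hb' : b ∉ T.erase a := fun h => hb (mem_of_mem_erase h)
    have h := hmax (insert b (T.erase a)) (by
      rw [mem_powersetCard]
      refine ⟨subset_univ _, ?_⟩
      rw [card_insert_of_notMem hb', card_erase_of_mem ha]
      omega)
    simp only [sum_insert hb'] at h
    have := add_sum_erase T s ha
    linarith
  have htop : ∑ i ∈ T, s i ≤ topSum t s := by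
    unfold topSum
    refine le_csSup ⟨∑ i ∈ T, s i, ?_⟩ ⟨T, hTc, rfl⟩
    rintro x ⟨T', hT', rfl⟩
    exact hmax T' (mem_powersetCard.2 ⟨subset_univ _, hT'⟩)
  have h1 : ∑ i, s i * v i = ∑ i, (s i - s a) * v i + s a := by
    simp only [sub_mul, sum_sub_distrib, ← mul_sum, hv1]
    ring
  have h2 : ∑ i, (s i - s a) * v i ≤ ∑ i, (if i ∈ T then (s i - s a) * (1 / (t : ℝ)) else 0) := by
    apply sum_le_sum
    intro i _
    split_ifs with h
    · exact mul_le_mul_of_nonneg_left (hv i) (sub_nonneg.2 (hmin i h))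
    · exact mul_nonpos_of_nonpos_of_nonneg (sub_nonpos.2 (hout i h)) (hv0 i)
  have h3 : ∑ i, (if i ∈ T then (s i - s a) * (1 / (t : ℝ)) else 0)
      = (1 / (t : ℝ)) * ∑ i ∈ T, s i - s a := by
    rw [sum_ite_mem, univ_inter, ← sum_mul, sum_sub_distrib, sum_const, hTc, nsmul_eq_mul]
    field_simp
  have h4 := mul_le_mul_of_nonneg_left htop (by positivity : (0 : ℝ) ≤ 1 / (t : ℝ))
  linarith

theorem aux_bdd {m n : ℕ} (k : ℕ) (S : Fin m → Fin n → ℝ) (hS : ∀ i j, 0 ≤ S i j)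
    (P : Finset (Fin m)) :
    BddAbove (dotS S '' GammaLe (indVec P) (fun _ => (k : ℝ) / (n : ℝ))) := by
  refine ⟨∑ i, ∑ j, S i j, ?_⟩
  rintro x ⟨γ, ⟨h0, h1, -⟩, rfl⟩
  refine sum_le_sum fun i _ => sum_le_sum fun j _ => ?_
  have h2 : γ i j ≤ ∑ j, γ i j := single_le_sum (fun j _ => h0 i j) (mem_univ j)
  have h3 : indVec P i ≤ 1 := by unfold indVec; split_ifs <;> norm_num
  rw [h1] at h2
  exact mul_le_of_le_one_right (hS i j) (h2.trans h3)

/-- upper bound on the true marginal gain of `f`. -/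
theorem stmt_16 (m n k : ℕ) (hm : 0 < m) (hn : 0 < n) (hk : 0 < k)
    (hkm : k ≤ m) (hkn : k ≤ n)
    (S : Fin m → Fin n → ℝ) (hS : ∀ i j, 0 ≤ S i j)
    (P : Finset (Fin m)) (hP : P.card < k)
    (j : Fin m) (hj : j ∉ P) :
    fval k S (insert j P) - fval k S P ≤
      sSup {x : ℝ | ∃ v : Fin n → ℝ, (∀ i, 0 ≤ v i) ∧ (∑ i, v i = 1) ∧
        (∀ i, v i ≤ (k : ℝ) / (n : ℝ)) ∧ x = ∑ i, S j i * v i} ∧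
    sSup {x : ℝ | ∃ v : Fin n → ℝ, (∀ i, 0 ≤ v i) ∧ (∑ i, v i = 1) ∧
        (∀ i, v i ≤ (k : ℝ) / (n : ℝ)) ∧ x = ∑ i, S j i * v i} ≤
      alphaMax k S j := by
  have htop : 0 < n / k := Nat.div_pos hkn hk
  have hkt : (k : ℝ) / n ≤ 1 / ((n / k : ℕ) : ℝ) := by
    have h1 : (0 : ℝ) < n := by exact_mod_cast hn
    have h2 : (0 : ℝ) < ((n / k : ℕ) : ℝ) := by exact_mod_cast htop
    rw [div_le_div_iff₀ h1 h2]
    have h3 : k * (n / k) ≤ 1 * n := by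
      rw [one_mul]; exact Nat.mul_div_le n k
    exact_mod_cast h3
  have hub : ∀ x ∈ {x : ℝ | ∃ v : Fin n → ℝ, (∀ i, 0 ≤ v i) ∧ (∑ i, v i = 1) ∧
        (∀ i, v i ≤ (k : ℝ) / (n : ℝ)) ∧ x = ∑ i, S j i * v i}, x ≤ alphaMax k S j := by
    rintro x ⟨v, h0, h1, h2, rfl⟩
    exact aux_top htop (Nat.div_le_self n k) (S j) v h0 h1 (fun i => (h2 i).trans hkt)
  constructor
  · rw [sub_le_iff_le_add]
    apply Real.sSup_le
    · rintro x ⟨γ, ⟨h0, h1, h2⟩, rfl⟩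
      have hrow : ∑ i, S j i * γ j i ≤ sSup {x : ℝ | ∃ v : Fin n → ℝ, (∀ i, 0 ≤ v i) ∧
          (∑ i, v i = 1) ∧ (∀ i, v i ≤ (k : ℝ) / (n : ℝ)) ∧ x = ∑ i, S j i * v i} := by
        refine le_csSup ⟨_, hub⟩ ⟨γ j, h0 j, ?_, ?_, rfl⟩
        · rw [h1 j]; simp [indVec]
        · intro i
          exact (single_le_sum (f := fun l => γ l i) (fun l _ => h0 l i) (mem_univ j)).trans (h2 i)
      have hrest : dotS S (fun i l => if i = j then 0 else γ i l) ≤ fval k S P := by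
        refine le_csSup (aux_bdd k S hS P) ⟨_, ⟨?_, ?_, ?_⟩, rfl⟩
        · intro i l
          split_ifs
          · exact le_rfl
          · exact h0 i l
        · intro i
          by_cases hi : i = j
          · subst hi; simp [indVec, hj]
          · simp [hi, h1 i, indVec]
        · intro l
          refine le_trans (sum_le_sum fun i _ => ?_) (h2 l)
          split_ifs
          · exact h0 i l
          · exact le_rfl
      have hdec : dotS S γ = ∑ i, S j i * γ j i +
          dotS S (fun i l => if i = j then 0 else γ i l) := by
        unfold dotS
        rw [← add_sum_erase univ _ (mem_univ j),
          ← add_sum_erase univ (fun i => ∑ l, S i l * (if i = j then 0 else γ i l)) (mem_univ j)]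
        have : ∑ i ∈ univ.erase j, ∑ l, S i l * (if i = j then 0 else γ i l)
            = ∑ i ∈ univ.erase j, ∑ l, S i l * γ i l := by
          refine sum_congr rfl fun i hi => ?_
          simp [ne_of_mem_erase hi]
        rw [this]
        simp
      linarith
    · apply add_nonneg
      · apply Real.sSup_nonneg
        rintro x ⟨v, h0, -, -, rfl⟩
        exact sum_nonneg fun i _ => mul_nonneg (hS j i) (h0 i)
      · apply Real.sSup_nonneg
        rintro x ⟨γ, ⟨h0, -, -⟩, rfl⟩
        exact sum_nonneg fun i _ => sum_nonneg fun l _ => mul_nonneg (hS i l) (h0 i l)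
  · apply Real.sSup_le hub
    refine mul_nonneg (by positivity) (Real.sSup_nonneg ?_)
    rintro x ⟨T, -, rfl⟩
    exact sum_nonneg fun i _ => hS j i
end
end

section
/- Sandwich bound for the approximate marginal gain: let P ⊆ {1,…,m} with |P| < k, let γ_P ∈ Γ_≤(1_P,(k/n)𝟙) be a coupling attaining f(P), and let j ∈ {1,…,m} with j ∉ P. Then α_{j,min} ≤ f̂(x_j ∣ P) ≤ f(P ∪ {j}) − f(P). -/
open Finset

noncomputable section

theorem botSum_aux {n t : ℕ} (ht : 0 < t) (htn : t ≤ n) (s v : Fin n → ℝ)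
    (hv0 : ∀ i, 0 ≤ v i) (hv1 : ∑ i, v i = 1) (hvt : ∀ i, v i ≤ 1 / (t : ℝ)) :
    (1 / (t : ℝ)) * botSum t s ≤ ∑ i, s i * v i := by
  have htp : (0 : ℝ) < t := by exact_mod_cast ht
  have hne : (Finset.powersetCard t (Finset.univ : Finset (Fin n))).Nonempty :=
    Finset.powersetCard_nonempty.2 (by simpa using htn)
  obtain ⟨T, hT, hTmin⟩ := Finset.exists_min_image _ (fun T => ∑ i ∈ T, s i) hne
  have hTc : T.card = t := (Finset.mem_powersetCard.1 hT).2
  have hTne : T.Nonempty := Finset.card_pos.1 (by omega)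
  obtain ⟨a, ha, hamax⟩ := Finset.exists_max_image T s hTne
  have hout : ∀ i, i ∉ T → s a ≤ s i := by
    intro i hi
    have hi' : i ∉ T.erase a := fun h => hi (Finset.mem_of_mem_erase h)
    have h := hTmin (insert i (T.erase a)) (Finset.mem_powersetCard.2
      ⟨Finset.subset_univ _, by
        rw [Finset.card_insert_of_notMem hi', Finset.card_erase_of_mem ha]; omega⟩)
    simp only [Finset.sum_insert hi'] at h
    have h2 := Finset.add_sum_erase T s ha
    linarith
  have hbot : botSum t s ≤ ∑ i ∈ T, s i := by
    apply csInf_le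
    · refine ⟨∑ i ∈ T, s i, ?_⟩
      rintro x ⟨U, hU, rfl⟩
      exact hTmin U (Finset.mem_powersetCard.2 ⟨Finset.subset_univ _, hU⟩)
    · exact ⟨T, hTc, rfl⟩
  have h1 : ∑ i ∈ T, (s i - s a) * (1 / (t : ℝ)) ≤ ∑ i, (s i - s a) * v i := by
    calc ∑ i ∈ T, (s i - s a) * (1 / (t : ℝ)) ≤ ∑ i ∈ T, (s i - s a) * v i :=
          Finset.sum_le_sum fun i hi =>
            mul_le_mul_of_nonpos_left (hvt i) (by linarith [hamax i hi])
      _ ≤ ∑ i, (s i - s a) * v i :=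
          Finset.sum_le_sum_of_subset_of_nonneg (Finset.subset_univ _)
            fun i _ hi => mul_nonneg (by linarith [hout i hi]) (hv0 i)
  have h2 : ∑ i, (s i - s a) * v i = ∑ i, s i * v i - s a := by
    simp only [sub_mul, Finset.sum_sub_distrib, ← Finset.mul_sum, hv1, mul_one]
  have h3 : ∑ i ∈ T, (s i - s a) * (1 / (t : ℝ)) = (1 / (t : ℝ)) * ∑ i ∈ T, s i - s a := by
    rw [← Finset.sum_mul, Finset.sum_sub_distrib, Finset.sum_const, hTc, nsmul_eq_mul]
    field_simp
  have h4 := mul_le_mul_of_nonneg_left hbot (by positivity : 0 ≤ 1 / (t : ℝ))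
  linarith

theorem bdd_aux {m n : ℕ} (S : Fin m → Fin n → ℝ) (hS : ∀ i j, 0 ≤ S i j)
    (μ : Fin m → ℝ) (ν : Fin n → ℝ) : BddAbove (dotS S '' GammaLe μ ν) := by
  refine ⟨∑ i, ∑ j, S i j * ν j, ?_⟩
  rintro x ⟨γ, ⟨h0, -, h2⟩, rfl⟩
  refine Finset.sum_le_sum fun i _ => Finset.sum_le_sum fun j _ =>
    mul_le_mul_of_nonneg_left ?_ (hS i j)
  exact (Finset.single_le_sum (f := fun i => γ i j) (fun i _ => h0 i j)
    (Finset.mem_univ i)).trans (h2 j)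

/-- sandwich bound
`α_{j,min} ≤ f̂(x_j ∣ P) ≤ f(P ∪ {j}) − f(P)`. -/
theorem stmt_17 (m n k : ℕ) (hm : 0 < m) (hn : 0 < n) (hk : 0 < k)
    (hkm : k ≤ m) (hkn : k ≤ n)
    (S : Fin m → Fin n → ℝ) (hS : ∀ i j, 0 ≤ S i j)
    (P : Finset (Fin m)) (hP : P.card < k)
    (γP : Fin m → Fin n → ℝ)
    (hγ : γP ∈ GammaLe (indVec P) (fun _ => (k : ℝ) / (n : ℝ)))
    (hopt : dotS S γP = fval k S P)
    (j : Fin m) (hj : j ∉ P) :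
    alphaMin k S j ≤ fhat k S γP j ∧
    fhat k S γP j ≤ fval k S (insert j P) - fval k S P := by
  obtain ⟨h0, h1, h2⟩ := hγ
  have hnR : (0 : ℝ) < n := by exact_mod_cast hn
  have hkR : (0 : ℝ) < k := by exact_mod_cast hk
  have hrow : ∀ i, γP j i = 0 := by
    have h := h1 j
    simp only [indVec, hj, if_false] at h
    intro i
    exact (Finset.sum_eq_zero_iff_of_nonneg (fun i _ => h0 j i)).1 h i (Finset.mem_univ i)
  have hupper : ∀ v : Fin n → ℝ, (∀ i, 0 ≤ v i) → (∑ i, v i = 1) →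
      (∀ i, v i ≤ (k : ℝ) / (n : ℝ) - ∑ l, γP l i) →
      ∑ i, S j i * v i ≤ fval k S (insert j P) - fval k S P := by
    intro v hv0 hv1 hv2
    have hmem : (fun l i => γP l i + if l = j then v i else 0) ∈
        GammaLe (indVec (insert j P)) (fun _ => (k : ℝ) / (n : ℝ)) := by
      refine ⟨fun l i => ?_, fun l => ?_, fun i => ?_⟩
      · have := h0 l i
        have := hv0 i
        dsimp only
        split_ifs <;> linarith
      · rw [Finset.sum_add_distrib, h1 l]
        by_cases hl : l = j
        · subst hl
          simp [indVec, hj, hv1]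
        · simp [indVec, hl]
      · rw [Finset.sum_add_distrib]
        have := hv2 i
        simp only [Finset.sum_ite_eq', Finset.mem_univ, if_true]
        linarith
    have hle := le_csSup (bdd_aux S hS _ _) (Set.mem_image_of_mem (dotS S) hmem)
    have heq : dotS S (fun l i => γP l i + if l = j then v i else 0)
        = dotS S γP + ∑ i, S j i * v i := by
      simp only [dotS, mul_add, Finset.sum_add_distrib]
      congr 1
      rw [Finset.sum_eq_single j]
      · simp
      · intro b _ hb
        simp [hb]
      · simp
    rw [heq, hopt] at hle
    have : fval k S P + ∑ i, S j i * v i ≤ fval k S (insert j P) := hle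
    linarith
  -- the normalized slack vector is feasible
  have hw0 : ∀ i, 0 ≤ (k : ℝ) / (n : ℝ) - ∑ l, γP l i := fun i => by linarith [h2 i]
  have hwsum : ∑ i, ((k : ℝ) / (n : ℝ) - ∑ l, γP l i) = k - P.card := by
    have hind : ∑ l, indVec P l = (P.card : ℝ) := by simp [indVec]
    rw [Finset.sum_sub_distrib, Finset.sum_comm, Finset.sum_congr rfl fun l _ => h1 l, hind]
    simp only [Finset.sum_const, Finset.card_univ, Fintype.card_fin, nsmul_eq_mul]
    field_simp
  have hW : (1 : ℝ) ≤ k - P.card := by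
    have : ((P.card + 1 : ℕ) : ℝ) ≤ k := by exact_mod_cast hP
    push_cast at this
    linarith
  have hW0 : (0 : ℝ) < k - P.card := by linarith
  set w : Fin n → ℝ := fun i => ((k : ℝ) / (n : ℝ) - ∑ l, γP l i) / (k - P.card) with hw
  have hv0 : ∀ i, 0 ≤ w i := fun i => div_nonneg (hw0 i) hW0.le
  have hv1 : ∑ i, w i = 1 := by
    rw [hw, ← Finset.sum_div, hwsum, div_self hW0.ne']
  have hv2 : ∀ i, w i ≤ (k : ℝ) / (n : ℝ) - ∑ l, γP l i := fun i => div_le_self (hw0 i) hW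
  have ht : 0 < n / k := Nat.div_pos hkn hk
  have htR : (0 : ℝ) < ((n / k : ℕ) : ℝ) := by exact_mod_cast ht
  have hkt : (k : ℝ) / n ≤ 1 / ((n / k : ℕ) : ℝ) := by
    rw [div_le_div_iff₀ hnR htR, one_mul]
    exact_mod_cast Nat.mul_div_le n k
  refine ⟨?_, ?_⟩
  · refine (botSum_aux ht (Nat.div_le_self n k) (S j) w hv0 hv1 fun i => ?_).trans ?_
    · have : 0 ≤ ∑ l, γP l i := Finset.sum_nonneg fun l _ => h0 l i
      linarith [hv2 i]
    · refine le_csSup ⟨fval k S (insert j P) - fval k S P, ?_⟩ ⟨w, hv0, hv1, hv2, rfl⟩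
      rintro x ⟨v, a, b, c, rfl⟩
      exact hupper v a b c
  · refine csSup_le ⟨_, w, hv0, hv1, hv2, rfl⟩ ?_
    rintro x ⟨v, a, b, c, rfl⟩
    exact hupper v a b c
end
end

section
/- Ratio bound for the approximate marginal gain: let P ⊆ {1,…,m} with |P| < k, let γ_P ∈ Γ_≤(1_P,(k/n)𝟙) be a coupling attaining f(P), and let j ∈ {1,…,m} with j ∉ P and α_{j,max} > 0. Then f̂(x_j ∣ P) ≥ (α_{j,min}/α_{j,max}) · (f(P ∪ {j}) − f(P)). -/
open Finset

noncomputable section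

lemma exists_top {n : ℕ} (t : ℕ) (ht : 0 < t) (htn : t ≤ n) (s v : Fin n → ℝ)
    (h0 : ∀ i, 0 ≤ v i) (h1 : ∑ i, v i = 1) (hv : ∀ i, v i ≤ 1 / (t : ℝ)) :
    ∃ T : Finset (Fin n), T.card = t ∧ ∑ i, s i * v i ≤ (1 / (t : ℝ)) * ∑ i ∈ T, s i := by
  classical
  have hne : (Finset.powersetCard t (Finset.univ : Finset (Fin n))).Nonempty := by
    apply Finset.powersetCard_nonempty.2
    simpa using htn
  obtain ⟨T, hT, hmax⟩ := Finset.exists_max_image _ (fun T => ∑ i ∈ T, s i) hne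
  have hTc : T.card = t := (Finset.mem_powersetCard.1 hT).2
  refine ⟨T, hTc, ?_⟩
  have hTne : T.Nonempty := by
    rw [← Finset.card_pos]; omega
  obtain ⟨a, haT, ha⟩ := Finset.exists_min_image T s hTne
  have hout : ∀ l, l ∉ T → s l ≤ s a := by
    intro l hl
    have hl' : l ∉ T.erase a := fun h => hl (Finset.mem_of_mem_erase h)
    have hmem : insert l (T.erase a) ∈ Finset.powersetCard t (Finset.univ : Finset (Fin n)) := by
      rw [Finset.mem_powersetCard]
      refine ⟨Finset.subset_univ _, ?_⟩
      rw [Finset.card_insert_of_notMem hl', Finset.card_erase_of_mem haT]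
      omega
    have h2 := hmax _ hmem
    rw [Finset.sum_insert hl'] at h2
    have h3 := Finset.add_sum_erase T s haT
    linarith
  have htp : (0 : ℝ) < t := by exact_mod_cast ht
  have key : ∑ i, (s i - s a) * v i ≤ ∑ i ∈ T, (s i - s a) * (1 / (t : ℝ)) := by
    calc ∑ i, (s i - s a) * v i
        ≤ ∑ i, if i ∈ T then (s i - s a) * (1 / (t : ℝ)) else 0 := by
          apply Finset.sum_le_sum
          intro i _
          split_ifs with hi
          · exact mul_le_mul_of_nonneg_left (hv i) (sub_nonneg.2 (ha i hi))
          · exact mul_nonpos_of_nonpos_of_nonneg (sub_nonpos.2 (hout i hi)) (h0 i)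
      _ = _ := by simp
  have e1 : ∑ i, (s i - s a) * v i = ∑ i, s i * v i - s a := by
    simp only [sub_mul, Finset.sum_sub_distrib]
    rw [← Finset.mul_sum, h1, mul_one]
  have e2 : ∑ i ∈ T, (s i - s a) * (1 / (t : ℝ)) = (1 / (t : ℝ)) * ∑ i ∈ T, s i - s a := by
    rw [← Finset.sum_mul, Finset.sum_sub_distrib, Finset.sum_const, hTc, nsmul_eq_mul]
    field_simp
  linarith

lemma sumSet_finite {n : ℕ} (t : ℕ) (s : Fin n → ℝ) :
    {x : ℝ | ∃ T : Finset (Fin n), T.card = t ∧ x = ∑ i ∈ T, s i}.Finite := by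
  apply (Set.finite_range (fun T : Finset (Fin n) => ∑ i ∈ T, s i)).subset
  rintro x ⟨T, _, rfl⟩
  exact ⟨T, rfl⟩

lemma dot_le_topSum {n : ℕ} (t : ℕ) (ht : 0 < t) (htn : t ≤ n) (s v : Fin n → ℝ)
    (h0 : ∀ i, 0 ≤ v i) (h1 : ∑ i, v i = 1) (hv : ∀ i, v i ≤ 1 / (t : ℝ)) :
    ∑ i, s i * v i ≤ (1 / (t : ℝ)) * topSum t s := by
  obtain ⟨T, hT, h⟩ := exists_top t ht htn s v h0 h1 hv
  refine h.trans (mul_le_mul_of_nonneg_left ?_ (by positivity))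
  exact le_csSup (sumSet_finite t s).bddAbove ⟨T, hT, rfl⟩

lemma botSum_le_dot {n : ℕ} (t : ℕ) (ht : 0 < t) (htn : t ≤ n) (s v : Fin n → ℝ)
    (h0 : ∀ i, 0 ≤ v i) (h1 : ∑ i, v i = 1) (hv : ∀ i, v i ≤ 1 / (t : ℝ)) :
    (1 / (t : ℝ)) * botSum t s ≤ ∑ i, s i * v i := by
  obtain ⟨T, hT, h⟩ := exists_top t ht htn (fun i => - s i) v h0 h1 hv
  have h2 : (1 / (t : ℝ)) * botSum t s ≤ (1 / (t : ℝ)) * ∑ i ∈ T, s i :=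
    mul_le_mul_of_nonneg_left
      (csInf_le (sumSet_finite t s).bddBelow ⟨T, hT, rfl⟩) (by positivity)
  simp only [neg_mul, Finset.sum_neg_distrib, mul_neg] at h
  linarith

/-- ratio bound
`f̂(x_j ∣ P) ≥ (α_{j,min}/α_{j,max})·(f(P ∪ {j}) − f(P))`. -/
theorem stmt_18 (m n k : ℕ) (hm : 0 < m) (hn : 0 < n) (hk : 0 < k)
    (hkm : k ≤ m) (hkn : k ≤ n)
    (S : Fin m → Fin n → ℝ) (hS : ∀ i j, 0 ≤ S i j)
    (P : Finset (Fin m)) (hP : P.card < k)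
    (γP : Fin m → Fin n → ℝ)
    (hγ : γP ∈ GammaLe (indVec P) (fun _ => (k : ℝ) / (n : ℝ)))
    (hopt : dotS S γP = fval k S P)
    (j : Fin m) (hj : j ∉ P) (hα : 0 < alphaMax k S j) :
    (alphaMin k S j / alphaMax k S j) * (fval k S (insert j P) - fval k S P) ≤
      fhat k S γP j := by
  classical
  have hnR : (0 : ℝ) < n := by exact_mod_cast hn
  have ht : 0 < n / k := Nat.div_pos hkn hk
  have htn : n / k ≤ n := Nat.div_le_self n k
  have htR : (0 : ℝ) < ((n / k : ℕ) : ℝ) := by exact_mod_cast ht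
  have hkt : (k : ℝ) / n ≤ 1 / ((n / k : ℕ) : ℝ) := by
    rw [div_le_div_iff₀ hnR htR]
    have := Nat.mul_div_le n k
    rw [one_mul]
    exact_mod_cast this
  obtain ⟨g0, g1, g2⟩ := hγ
  -- the set defining `fval` is bounded above
  have hbdd : BddAbove (dotS S '' GammaLe (indVec P) (fun _ => (k : ℝ) / (n : ℝ))) := by
    refine ⟨∑ i, ∑ l, S i l * ((k : ℝ) / n), ?_⟩
    rintro _ ⟨γ, ⟨c0, c1, c2⟩, rfl⟩
    refine Finset.sum_le_sum fun i _ => Finset.sum_le_sum fun l _ =>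
      mul_le_mul_of_nonneg_left ?_ (hS i l)
    exact (Finset.single_le_sum (f := fun i => γ i l) (fun i _ => c0 i l)
      (Finset.mem_univ i)).trans (c2 l)
  have hf0 : 0 ≤ fval k S P := by
    rw [← hopt]
    exact Finset.sum_nonneg fun i _ => Finset.sum_nonneg fun l _ => mul_nonneg (hS i l) (g0 i l)
  -- marginal gain is at most `alphaMax`
  have hgain : fval k S (insert j P) ≤ fval k S P + alphaMax k S j := by
    apply Real.sSup_le _ (by linarith)
    rintro _ ⟨γ, ⟨c0, c1, c2⟩, rfl⟩
    have hrow : ∑ l, S j l * γ j l ≤ alphaMax k S j := by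
      apply dot_le_topSum (n / k) ht htn (S j) (γ j) (c0 j)
      · rw [c1 j]; simp [indVec]
      · intro l
        exact ((Finset.single_le_sum (f := fun i => γ i l) (fun i _ => c0 i l)
          (Finset.mem_univ j)).trans (c2 l)).trans hkt
    have hrest : dotS S (fun i l => if i = j then 0 else γ i l) ≤ fval k S P := by
      apply le_csSup hbdd
      refine ⟨_, ⟨?_, ?_, ?_⟩, rfl⟩
      · intro i l
        split_ifs
        · exact le_rfl
        · exact c0 i l
      · intro i
        by_cases hi : i = j
        · subst hi; simp [indVec, hj]
        · simp only [hi, if_false]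
          rw [c1 i]; simp [indVec, hi]
      · intro l
        refine le_trans (Finset.sum_le_sum fun i _ => ?_) (c2 l)
        split_ifs
        · exact c0 i l
        · exact le_rfl
    have hsplit : dotS S γ = dotS S (fun i l => if i = j then 0 else γ i l)
        + ∑ l, S j l * γ j l := by
      unfold dotS
      rw [← Finset.sum_erase_add _ _ (Finset.mem_univ j),
        ← Finset.sum_erase_add (a := j) (s := Finset.univ)
          (f := fun i => ∑ l, S i l * (if i = j then 0 else γ i l)) (Finset.mem_univ j)]
      have : ∑ i ∈ Finset.univ.erase j, ∑ l, S i l * (if i = j then 0 else γ i l)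
          = ∑ i ∈ Finset.univ.erase j, ∑ l, S i l * γ i l := by
        refine Finset.sum_congr rfl fun i hi => ?_
        simp [Finset.ne_of_mem_erase hi]
      rw [this]
      simp
    linarith
  have hmin0 : 0 ≤ alphaMin k S j := by
    unfold alphaMin botSum
    refine mul_nonneg (by positivity) (Real.sInf_nonneg ?_)
    rintro x ⟨T, _, rfl⟩
    exact Finset.sum_nonneg fun l _ => hS j l
  -- `fhat` is at least `alphaMin`
  have hhat : alphaMin k S j ≤ fhat k S γP j := by
    set r : Fin n → ℝ := fun i => (k : ℝ) / n - ∑ l, γP l i with hr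
    have hr0 : ∀ i, 0 ≤ r i := fun i => sub_nonneg.2 (g2 i)
    have hrs : ∑ i, r i = (k : ℝ) - P.card := by
      simp only [hr, Finset.sum_sub_distrib]
      rw [Finset.sum_comm]
      simp only [g1]
      simp [indVec]
      field_simp
    have hR : (1 : ℝ) ≤ (k : ℝ) - P.card := by
      have : ((P.card + 1 : ℕ) : ℝ) ≤ k := by exact_mod_cast hP
      push_cast at this
      linarith
    have hRpos : (0 : ℝ) < (k : ℝ) - P.card := by linarith
    have hv1 : ∀ i, r i / ((k : ℝ) - P.card) ≤ r i := fun i => div_le_self (hr0 i) hR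
    have hv0 : ∀ i, 0 ≤ r i / ((k : ℝ) - P.card) := fun i => div_nonneg (hr0 i) hRpos.le
    have hvs : ∑ i, r i / ((k : ℝ) - P.card) = 1 := by
      rw [← Finset.sum_div, hrs, div_self hRpos.ne']
    have hle : alphaMin k S j ≤ ∑ i, S j i * (r i / ((k : ℝ) - P.card)) := by
      apply botSum_le_dot (n / k) ht htn (S j) _ hv0 hvs
      intro i
      refine (hv1 i).trans (le_trans ?_ hkt)
      exact sub_le_self _ (Finset.sum_nonneg fun l _ => g0 l i)
    refine hle.trans (le_csSup ?_ ⟨_, hv0, hvs, hv1, rfl⟩)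
    refine ⟨∑ i, S j i * r i, ?_⟩
    rintro x ⟨v, _, _, hv, rfl⟩
    exact Finset.sum_le_sum fun i _ => mul_le_mul_of_nonneg_left (hv i) (hS j i)
  refine le_trans ?_ hhat
  calc alphaMin k S j / alphaMax k S j * (fval k S (insert j P) - fval k S P)
      ≤ alphaMin k S j / alphaMax k S j * alphaMax k S j :=
        mul_le_mul_of_nonneg_left (by linarith) (div_nonneg hmin0 hα.le)
    _ = alphaMin k S j := div_mul_cancel₀ _ hα.ne'
end
end
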